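/- Let T ∈ Λ³V be a 3-form and set σ_T := (1/2)·Σᵢ (eᵢ⨼T)∧(eᵢ⨼T) ∈ Λ⁴V. Then in Cl(V) one has T·T = −2·σ_T + ‖T‖²·1, where T and σ_T are regarded as elements of Cl(V) under the canonical identification, the product T·T is the Clifford product, and ‖T‖² is the squared norm of T induced by ⟨·,·⟩ (for which the forms e_i∧e_j∧e_k, i<j<k, are orthonormal). -/

import Mathlib

noncomputable section

/-- The quadratic form `Q(v) = −⟨v,v⟩ = −‖v‖²` on `V = ℝⁿ`, so that in `Cl(V)` one has
`v·v = −‖v‖²` and `v·w + w·v = −2⟨v,w⟩`. -/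
def negQ (n : ℕ) : QuadraticForm ℝ (Fin n → ℝ) :=
  QuadraticMap.weightedSumSquares ℝ (fun _ : Fin n => (-1 : ℝ))

/-- The orthonormal basis vector `eᵢ` viewed inside the Clifford algebra `Cl(V)`. -/
def eCl (n : ℕ) (i : Fin n) : CliffordAlgebra (negQ n) :=
  CliffordAlgebra.ι (negQ n) (Pi.single i 1)

/-- The orthonormal basis vector `eᵢ` viewed inside the exterior algebra `ΛV`. -/
def eExt (n : ℕ) (i : Fin n) : ExteriorAlgebra ℝ (Fin n → ℝ) :=
  ExteriorAlgebra.ι ℝ (Pi.single i 1)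

/-- The dual functional `⟨eᵢ, ·⟩` of `eᵢ` with respect to the inner product, i.e. the
`i`-th coordinate functional. -/
def coordDual (n : ℕ) (i : Fin n) : Module.Dual ℝ (Fin n → ℝ) := LinearMap.proj i

/-- Interior contraction `eᵢ⨼ ·` on the exterior algebra `ΛV` (the exterior algebra is
the Clifford algebra of the zero form, and `contractLeft` is contraction). -/
def contr (n : ℕ) (i : Fin n) :
    ExteriorAlgebra ℝ (Fin n → ℝ) →ₗ[ℝ] ExteriorAlgebra ℝ (Fin n → ℝ) :=
  CliffordAlgebra.contractLeft (Q := (0 : QuadraticForm ℝ (Fin n → ℝ))) (coordDual n i)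

/-- The canonical linear identification `ΛV ≅ Cl(V)` sending
`e_{i₁} ∧ ⋯ ∧ e_{i_k}` (for `i₁ < ⋯ < i_k`) to the Clifford product
`e_{i₁} ⋯ e_{i_k}`. -/
def phi (n : ℕ) : ExteriorAlgebra ℝ (Fin n → ℝ) ≃ₗ[ℝ] CliffordAlgebra (negQ n) :=
  (CliffordAlgebra.equivExterior (negQ n)).symm


/-- The 4-form `σ_T := (1/2)·Σᵢ (eᵢ⨼T) ∧ (eᵢ⨼T) ∈ Λ⁴V` associated to a 3-form `T`
(products taken in the exterior algebra, i.e. wedge products). -/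
def sigmaT (n : ℕ) (T : ExteriorAlgebra ℝ (Fin n → ℝ)) : ExteriorAlgebra ℝ (Fin n → ℝ) :=
  ((1 : ℝ) / 2) • ∑ i, contr n i T * contr n i T

set_option linter.unusedSimpArgs false

def dl (n : ℕ) (a b : Fin n) : ℝ := if a = b then 1 else 0

theorem dl_symm (n : ℕ) (a b : Fin n) : dl n a b = dl n b a := by
  unfold dl; simp [eq_comm]

theorem dl_ne (n : ℕ) {a b : Fin n} (h : a ≠ b) : dl n a b = 0 := by
  unfold dl; simp [h]

theorem dl_sum (n : ℕ) (a b : Fin n) : ∑ x, dl n x a * dl n x b = dl n a b := by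
  unfold dl; simp [eq_comm]

theorem negQ_polar (n : ℕ) (a b : Fin n) :
    QuadraticMap.polar (negQ n) (Pi.single a 1) (Pi.single b 1) = - (2 * dl n a b) := by
  simp only [QuadraticMap.polar, negQ, QuadraticMap.weightedSumSquares_apply, dl]
  rw [← Finset.sum_sub_distrib, ← Finset.sum_sub_distrib, Finset.sum_eq_single a]
  · by_cases hab : a = b
    · subst hab; simp; norm_num
    · simp [hab]
  · intro c _ hc; simp [hc]
  · simp

theorem E_swap (n : ℕ) (a b : Fin n) :
    eCl n a * eCl n b = - (eCl n b * eCl n a) - (2 * dl n b a) • 1 := by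
  have h := CliffordAlgebra.ι_mul_ι_add_swap (Q := negQ n) (Pi.single a 1) (Pi.single b 1)
  rw [negQ_polar, Algebra.algebraMap_eq_smul_one] at h
  unfold eCl
  rw [dl_symm, eq_sub_iff_add_eq, eq_neg_iff_add_eq_zero, add_right_comm, h, neg_smul,
    neg_add_cancel]

theorem E_swap' (n : ℕ) (a b : Fin n) (x) :
    eCl n a * (eCl n b * x) = - (eCl n b * (eCl n a * x)) - (2 * dl n b a) • x := by
  rw [← mul_assoc, E_swap]
  simp only [sub_mul, neg_mul, smul_mul_assoc, one_mul, mul_assoc]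

def Dc (n : ℕ) (a : Fin n) : CliffordAlgebra (negQ n) →ₗ[ℝ] CliffordAlgebra (negQ n) :=
  CliffordAlgebra.contractLeft (coordDual n a)

theorem Dc_mul (n : ℕ) (a b : Fin n) (x) :
    Dc n a (eCl n b * x) = dl n a b • x - eCl n b * Dc n a x := by
  unfold Dc eCl
  rw [CliffordAlgebra.contractLeft_ι_mul]
  simp [coordDual, dl, Pi.single_apply]

theorem Dc_one (n : ℕ) (a : Fin n) : Dc n a 1 = 0 := CliffordAlgebra.contractLeft_one _ _

theorem Dc_e (n : ℕ) (a b : Fin n) : Dc n a (eCl n b) = dl n a b • 1 := by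
  have := Dc_mul n a b 1
  simpa [Dc_one] using this

theorem contr_mul (n : ℕ) (a b : Fin n) (x) :
    contr n a (eExt n b * x) = dl n a b • x - eExt n b * contr n a x := by
  unfold contr eExt
  have := CliffordAlgebra.contractLeft_ι_mul (Q := (0 : QuadraticForm ℝ (Fin n → ℝ))) (coordDual n a) (Pi.single b 1) x
  refine this.trans ?_
  simp [coordDual, dl, Pi.single_apply]

theorem contr_one (n : ℕ) (a : Fin n) : contr n a 1 = 0 := CliffordAlgebra.contractLeft_one _ _

theorem contr_e (n : ℕ) (a b : Fin n) : contr n a (eExt n b) = dl n a b • 1 := by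
  have := contr_mul n a b 1
  simpa [contr_one] using this

theorem phi_one (n : ℕ) : phi n 1 = 1 :=
  CliffordAlgebra.changeForm_one (CliffordAlgebra.changeForm.neg_proof
    CliffordAlgebra.changeForm.associated_neg_proof)

theorem phi_mul (n : ℕ) (a : Fin n) (x) :
    phi n (eExt n a * x) = eCl n a * phi n x + Dc n a (phi n x) := by
  refine (CliffordAlgebra.changeForm_ι_mul (CliffordAlgebra.changeForm.neg_proof
    CliffordAlgebra.changeForm.associated_neg_proof) _ _).trans ?_
  rw [sub_eq_add_neg]
  congr 1
  rw [← LinearMap.neg_apply, ← map_neg]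
  unfold Dc
  have : -((-QuadraticMap.associated (-negQ n)) (Pi.single a (1:ℝ)) : Module.Dual ℝ (Fin n → ℝ))
      = coordDual n a := by
    refine LinearMap.pi_ext' fun b => ?_
    ext
    have h := negQ_polar n a b
    simp [QuadraticMap.polar] at h
    simp [QuadraticMap.associated_apply, coordDual, h, Pi.single_apply, dl]
  rw [this]
  rfl

theorem phi_e (n : ℕ) (a : Fin n) : phi n (eExt n a) = eCl n a := by
  have := phi_mul n a 1
  simpa [phi_one, Dc_one] using this

theorem phi3 (n : ℕ) {i j k : Fin n} (hij : i ≠ j) (hik : i ≠ k) (hjk : j ≠ k) :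
    phi n (eExt n i * eExt n j * eExt n k) = eCl n i * (eCl n j * eCl n k) := by
  simp [mul_assoc, phi_mul, phi_e, Dc_mul, Dc_e, dl_ne n hij, dl_ne n hik, dl_ne n hjk]

theorem phi4 (n : ℕ) {b c m p : Fin n} (hbc : b ≠ c) (hmp : m ≠ p) :
    phi n (eExt n b * (eExt n c * (eExt n m * eExt n p))) =
      eCl n b * (eCl n c * (eCl n m * eCl n p))
      + dl n c m • (eCl n b * eCl n p) - dl n c p • (eCl n b * eCl n m)
      - dl n b m • (eCl n c * eCl n p) + dl n b p • (eCl n c * eCl n m)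
      + (dl n c m * dl n b p - dl n c p * dl n b m) • 1 := by
  simp only [phi_mul, phi_e, Dc_mul, Dc_e, dl_ne n hbc, dl_ne n hmp, map_add, map_sub, map_smul,
    mul_add, mul_sub, mul_smul_comm, mul_one, Dc_one, smul_zero, zero_smul, map_zero, mul_zero]
  module

theorem contr3 (n : ℕ) (x i j k : Fin n) :
    contr n x (eExt n i * eExt n j * eExt n k) = dl n x i • (eExt n j * eExt n k)
      - dl n x j • (eExt n i * eExt n k) + dl n x k • (eExt n i * eExt n j) := by
  simp only [mul_assoc, contr_mul, contr_e, mul_sub, mul_smul_comm, mul_one]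
  module

theorem contr_pair (n : ℕ) (i j k l m p : Fin n) :
    ∑ x, contr n x (eExt n i * eExt n j * eExt n k) * contr n x (eExt n l * eExt n m * eExt n p)
     = dl n i l • (eExt n j * (eExt n k * (eExt n m * eExt n p)))
     - dl n i m • (eExt n j * (eExt n k * (eExt n l * eExt n p)))
     + dl n i p • (eExt n j * (eExt n k * (eExt n l * eExt n m)))
     - dl n j l • (eExt n i * (eExt n k * (eExt n m * eExt n p)))
     + dl n j m • (eExt n i * (eExt n k * (eExt n l * eExt n p)))
     - dl n j p • (eExt n i * (eExt n k * (eExt n l * eExt n m)))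
     + dl n k l • (eExt n i * (eExt n j * (eExt n m * eExt n p)))
     - dl n k m • (eExt n i * (eExt n j * (eExt n l * eExt n p)))
     + dl n k p • (eExt n i * (eExt n j * (eExt n l * eExt n m))) := by
  simp only [contr3]
  simp only [add_mul, sub_mul, mul_add, mul_sub, smul_mul_smul_comm,
    Finset.sum_add_distrib, Finset.sum_sub_distrib, ← Finset.sum_smul, dl_sum, mul_assoc]
  module

theorem pair (n : ℕ) (i j k l m p : Fin n) (hij : i < j) (hjk : j < k) (hlm : l < m) (hmp : m < p) :
    phi n (eExt n i * eExt n j * eExt n k) * phi n (eExt n l * eExt n m * eExt n p)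
    + phi n (eExt n l * eExt n m * eExt n p) * phi n (eExt n i * eExt n j * eExt n k)
    = (-2 : ℝ) • phi n (∑ x, contr n x (eExt n i * eExt n j * eExt n k)
        * contr n x (eExt n l * eExt n m * eExt n p))
      + (if i = l ∧ j = m ∧ k = p then (2 : ℝ) else 0) • 1 := by
  have hd : (if i = l ∧ j = m ∧ k = p then (2 : ℝ) else 0) =
     2 * (dl n i l * (dl n j m * dl n k p - dl n j p * dl n k m)
     - dl n i m * (dl n j l * dl n k p - dl n j p * dl n k l)
     + dl n i p * (dl n j l * dl n k m - dl n j m * dl n k l)) := by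
    unfold dl
    rcases eq_or_ne i l with h1 | h1
    · subst h1
      have a1 : i ≠ m := hlm.ne
      have a2 : i ≠ p := (hlm.trans hmp).ne
      rcases eq_or_ne j m with h2 | h2
      · subst h2
        have a3 : j ≠ p := hmp.ne
        simp [a1, a2, a3]
      · have a4 : ¬ (j = p ∧ k = m) := by rintro ⟨rfl, rfl⟩; exact absurd hjk hmp.asymm
        have a5 : j = p → k ≠ m := fun x y => a4 ⟨x, y⟩
        by_cases h3 : j = p <;> simp [a1, a2, h2, h3]
        simp [a5 h3, hmp.ne.symm]
    · have b1 : i = m → j ≠ l := by rintro rfl rfl; exact absurd hij hlm.asymm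
      have b2 : i = m → k ≠ l := by rintro rfl rfl; exact absurd (hij.trans hjk) hlm.asymm
      have b3 : i = p → j ≠ l := by rintro rfl rfl; exact absurd hij (hlm.trans hmp).asymm
      have b4 : i = p → k ≠ l := by
        rintro rfl rfl; exact absurd (hij.trans hjk) (hlm.trans hmp).asymm
      by_cases h4 : i = m
      · have c : m ≠ p := hmp.ne
        simp [h1, b1 h4, b2 h4, show i ≠ p from h4 ▸ c]
      · by_cases h5 : i = p
        · simp [h1, h4, b3 h5, b4 h5]
        · simp [h1, h4, h5]
  rw [hd, contr_pair, phi3 n hij.ne (hij.trans hjk).ne hjk.ne,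
    phi3 n hlm.ne (hlm.trans hmp).ne hmp.ne]
  simp only [map_add, map_sub, map_smul, phi4 n hij.ne hlm.ne, phi4 n hij.ne hmp.ne,
    phi4 n hij.ne (hlm.trans hmp).ne, phi4 n hjk.ne hlm.ne, phi4 n hjk.ne hmp.ne,
    phi4 n hjk.ne (hlm.trans hmp).ne, phi4 n (hij.trans hjk).ne hlm.ne,
    phi4 n (hij.trans hjk).ne hmp.ne, phi4 n (hij.trans hjk).ne (hlm.trans hmp).ne, mul_assoc]
  simp only [E_swap n l i, E_swap n l j, E_swap n l k, E_swap n m i, E_swap n m j, E_swap n m k,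
    E_swap n p i, E_swap n p j, E_swap n p k,
    E_swap' n l i, E_swap' n l j, E_swap' n l k, E_swap' n m i, E_swap' n m j, E_swap' n m k,
    E_swap' n p i, E_swap' n p j, E_swap' n p k, mul_sub, mul_neg, mul_smul_comm, mul_one]
  module

theorem main_aux {ι : Type*} (n : ℕ) (S : Finset ι) (e : ι → ExteriorAlgebra ℝ (Fin n → ℝ))
    (a : ι → ℝ) [DecidableEq ι]
    (h : ∀ s ∈ S, ∀ t ∈ S, phi n (e s) * phi n (e t) + phi n (e t) * phi n (e s)
      = (-2 : ℝ) • phi n (∑ x, contr n x (e s) * contr n x (e t))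
        + (if s = t then (2 : ℝ) else 0) • 1) :
    phi n (∑ s ∈ S, a s • e s) * phi n (∑ s ∈ S, a s • e s) =
      (-2 : ℝ) • phi n (sigmaT n (∑ s ∈ S, a s • e s)) + (∑ s ∈ S, a s ^ 2) • 1 := by
  have h1 : phi n (∑ s ∈ S, a s • e s) * phi n (∑ s ∈ S, a s • e s)
      = ∑ s ∈ S, ∑ t ∈ S, (a s * a t) • (phi n (e s) * phi n (e t)) := by
    simp only [map_sum, map_smul, Finset.sum_mul_sum, smul_mul_smul_comm]
  have h2 : phi n (∑ s ∈ S, a s • e s) * phi n (∑ s ∈ S, a s • e s)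
      = ∑ s ∈ S, ∑ t ∈ S, (a s * a t) • (phi n (e t) * phi n (e s)) := by
    rw [h1, Finset.sum_comm]
    simp only [mul_comm (a _) (a _)]
  have h3 : phi n (sigmaT n (∑ s ∈ S, a s • e s)) =
      (1 / 2 : ℝ) • ∑ s ∈ S, ∑ t ∈ S, (a s * a t) •
        phi n (∑ x, contr n x (e s) * contr n x (e t)) := by
    simp only [sigmaT, map_smul]
    congr 2
    simp only [map_sum, map_smul, Finset.sum_mul_sum, smul_mul_smul_comm, Finset.smul_sum]
    rw [Finset.sum_comm]
    refine Finset.sum_congr rfl fun s _ => ?_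
    rw [Finset.sum_comm]
  have h4 : phi n (∑ s ∈ S, a s • e s) * phi n (∑ s ∈ S, a s • e s)
      + phi n (∑ s ∈ S, a s • e s) * phi n (∑ s ∈ S, a s • e s) =
      (-2 : ℝ) • (∑ s ∈ S, ∑ t ∈ S, (a s * a t) •
        phi n (∑ x, contr n x (e s) * contr n x (e t))) + (2 * ∑ s ∈ S, a s ^ 2) • 1 := by
    conv_lhs => arg 1; rw [h1]
    conv_lhs => arg 2; rw [h2]
    simp only [← Finset.sum_add_distrib, ← smul_add]
    rw [Finset.sum_congr rfl fun s hs => Finset.sum_congr rfl fun t ht => by rw [h s hs t ht]]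
    simp only [smul_add, Finset.sum_add_distrib, smul_smul, Finset.smul_sum, ← Finset.sum_smul]
    congr 1
    · simp only [mul_comm]
    · congr 1
      rw [Finset.mul_sum]
      refine Finset.sum_congr rfl fun s hs => ?_
      simp [hs]
      ring
  rw [h3]
  have h5 := congrArg (fun z => (1 / 2 : ℝ) • z) h4
  refine Eq.trans ?_ (h5.trans ?_) <;> module

/-- Lemma C.1 (6): for a 3-form `T ∈ Λ³V` with coefficients `a i j k` on the
orthonormal forms `eᵢ∧eⱼ∧e_k` (`i<j<k`), one has in `Cl(V)` the identity
`T·T = −2σ_T + ‖T‖²·1`, where `T` and `σ_T` are regarded in `Cl(V)` via the canonical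
identification, `T·T` is the Clifford product, and `‖T‖² = Σ_{i<j<k} (a i j k)²`. -/
theorem torsion_clifford_square (n : ℕ) (a : Fin n → Fin n → Fin n → ℝ)
    (T : ExteriorAlgebra ℝ (Fin n → ℝ))
    (hT : T = ∑ i, ∑ j, ∑ k, if i < j ∧ j < k
        then a i j k • (eExt n i * eExt n j * eExt n k) else 0)
    (normSqT : ℝ)
    (hnorm : normSqT = ∑ i, ∑ j, ∑ k, if i < j ∧ j < k then (a i j k) ^ 2 else 0) :
    phi n T * phi n T
      = (-2 : ℝ) • phi n (sigmaT n T) + normSqT • (1 : CliffordAlgebra (negQ n)) := by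
  classical
  have key := main_aux n
    ((Finset.univ : Finset (Fin n × Fin n × Fin n)).filter (fun s => s.1 < s.2.1 ∧ s.2.1 < s.2.2))
    (fun s => eExt n s.1 * eExt n s.2.1 * eExt n s.2.2) (fun s => a s.1 s.2.1 s.2.2) (by
      rintro ⟨i, j, k⟩ hs ⟨l, m, p⟩ ht
      simp only [Finset.mem_filter, Finset.mem_univ, true_and] at hs ht
      have := pair n i j k l m p hs.1 hs.2 ht.1 ht.2
      simpa only [Prod.mk.injEq] using this)
  have hT' : T = ∑ s ∈ (Finset.univ : Finset (Fin n × Fin n × Fin n)).filter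
      (fun s => s.1 < s.2.1 ∧ s.2.1 < s.2.2),
      a s.1 s.2.1 s.2.2 • (eExt n s.1 * eExt n s.2.1 * eExt n s.2.2) := by
    rw [hT, Finset.sum_filter]
    simp only [Fintype.sum_prod_type]
  have hn' : normSqT = ∑ s ∈ (Finset.univ : Finset (Fin n × Fin n × Fin n)).filter
      (fun s => s.1 < s.2.1 ∧ s.2.1 < s.2.2), a s.1 s.2.1 s.2.2 ^ 2 := by
    rw [hnorm, Finset.sum_filter]
    simp only [Fintype.sum_prod_type]
  rw [hT', hn']
  exact key
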